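/- Let A be a differential graded Poisson algebra over a field k. Then (A^{op})^e ≅ (A^e)^{op} as differential graded algebras, where A^{op} is the opposite differential graded Poisson algebra of A and (A^e)^{op} is the opposite differential graded algebra of A^e. -/

import Mathlib

open scoped TensorProduct

noncomputable section

namespace DGPaper

universe u

/-- A differential graded Lie algebra structure on a `k`-vector space `V`. -/
structure DGLAOn (k : Type u) [Field k] (V : Type u) [AddCommGroup V] [Module k V] where
  gr : ℤ → Submodule k V
  decomp : DirectSum.Decomposition gr
  br : V →ₗ[k] V →ₗ[k] V
  br_mem : ∀ {i j : ℤ} {a b : V}, a ∈ gr i → b ∈ gr j → br a b ∈ gr (i + j)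
  br_antisymm : ∀ {i j : ℤ} {a b : V}, a ∈ gr i → b ∈ gr j →
    br a b = -(((-1 : k) ^ (i * j)) • br b a)
  br_jacobi : ∀ {i j l : ℤ} {a b c : V}, a ∈ gr i → b ∈ gr j → c ∈ gr l →
    br a (br b c) = br (br a b) c + ((-1 : k) ^ (i * j)) • br b (br a c)
  d : V →ₗ[k] V
  d_mem : ∀ {i : ℤ} {a : V}, a ∈ gr i → d a ∈ gr (i + 1)
  d_sq : ∀ a : V, d (d a) = 0
  d_br : ∀ {i j : ℤ} {a b : V}, a ∈ gr i → b ∈ gr j →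
    d (br a b) = br (d a) b + ((-1 : k) ^ i) • br a (d b)

/-- A differential graded (associative, unital) algebra structure on a `k`-vector space `N`. -/
structure DGAOn (k : Type u) [Field k] (N : Type u) [AddCommGroup N] [Module k N] where
  gr : ℤ → Submodule k N
  decomp : DirectSum.Decomposition gr
  mul : N →ₗ[k] N →ₗ[k] N
  one : N
  one_mem : one ∈ gr 0
  mul_mem : ∀ {i j : ℤ} {a b : N}, a ∈ gr i → b ∈ gr j → mul a b ∈ gr (i + j)
  mul_assoc : ∀ a b c : N, mul (mul a b) c = mul a (mul b c)
  one_mul : ∀ a : N, mul one a = a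
  mul_one : ∀ a : N, mul a one = a
  d : N →ₗ[k] N
  d_mem : ∀ {i : ℤ} {a : N}, a ∈ gr i → d a ∈ gr (i + 1)
  d_sq : ∀ a : N, d (d a) = 0
  d_mul : ∀ {i j : ℤ} {a b : N}, a ∈ gr i → b ∈ gr j →
    d (mul a b) = mul (d a) b + ((-1 : k) ^ i) • mul a (d b)

/-- A differential graded Poisson algebra structure on a `k`-vector space `M`. -/
structure DGPAOn (k : Type u) [Field k] (M : Type u) [AddCommGroup M] [Module k M] where
  gr : ℤ → Submodule k M
  decomp : DirectSum.Decomposition gr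
  mul : M →ₗ[k] M →ₗ[k] M
  one : M
  one_mem : one ∈ gr 0
  mul_mem : ∀ {i j : ℤ} {a b : M}, a ∈ gr i → b ∈ gr j → mul a b ∈ gr (i + j)
  mul_assoc : ∀ a b c : M, mul (mul a b) c = mul a (mul b c)
  one_mul : ∀ a : M, mul one a = a
  mul_one : ∀ a : M, mul a one = a
  mul_comm : ∀ {i j : ℤ} {a b : M}, a ∈ gr i → b ∈ gr j →
    mul a b = ((-1 : k) ^ (i * j)) • mul b a
  br : M →ₗ[k] M →ₗ[k] M
  br_mem : ∀ {i j : ℤ} {a b : M}, a ∈ gr i → b ∈ gr j → br a b ∈ gr (i + j)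
  br_antisymm : ∀ {i j : ℤ} {a b : M}, a ∈ gr i → b ∈ gr j →
    br a b = -(((-1 : k) ^ (i * j)) • br b a)
  br_jacobi : ∀ {i j l : ℤ} {a b c : M}, a ∈ gr i → b ∈ gr j → c ∈ gr l →
    br a (br b c) = br (br a b) c + ((-1 : k) ^ (i * j)) • br b (br a c)
  br_deriv : ∀ {i j l : ℤ} {a b c : M}, a ∈ gr i → b ∈ gr j → c ∈ gr l →
    br a (mul b c) = mul (br a b) c + ((-1 : k) ^ (i * j)) • mul b (br a c)
  d : M →ₗ[k] M
  d_mem : ∀ {i : ℤ} {a : M}, a ∈ gr i → d a ∈ gr (i + 1)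
  d_sq : ∀ a : M, d (d a) = 0
  d_br : ∀ {i j : ℤ} {a b : M}, a ∈ gr i → b ∈ gr j →
    d (br a b) = br (d a) b + ((-1 : k) ^ i) • br a (d b)
  d_mul : ∀ {i j : ℤ} {a b : M}, a ∈ gr i → b ∈ gr j →
    d (mul a b) = mul (d a) b + ((-1 : k) ^ i) • mul a (d b)

section Defs

variable {k : Type u} [Field k]

/-- The differential graded Lie algebra underlying a differential graded Poisson algebra. -/
def DGPAOn.toLie {M : Type u} [AddCommGroup M] [Module k M] (P : DGPAOn k M) :
    DGLAOn k M where
  gr := P.gr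
  decomp := P.decomp
  br := P.br
  br_mem := P.br_mem
  br_antisymm := P.br_antisymm
  br_jacobi := P.br_jacobi
  d := P.d
  d_mem := P.d_mem
  d_sq := P.d_sq
  d_br := P.d_br

section Maps

variable {M N : Type u} [AddCommGroup M] [Module k M] [AddCommGroup N] [Module k N]

/-- A morphism of differential graded algebras (degree-0, multiplicative, unital,
commuting with the differentials). -/
def IsDGAHom (E : DGAOn k M) (F : DGAOn k N) (f : M →ₗ[k] N) : Prop :=
  (∀ {n : ℤ} {x : M}, x ∈ E.gr n → f x ∈ F.gr n) ∧
  (∀ x y : M, f (E.mul x y) = F.mul (f x) (f y)) ∧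
  f E.one = F.one ∧
  ∀ x : M, f (E.d x) = F.d (f x)

/-- A morphism of differential graded Poisson algebras. -/
def IsDGPAHom (P : DGPAOn k M) (Q : DGPAOn k N) (f : M →ₗ[k] N) : Prop :=
  (∀ {n : ℤ} {x : M}, x ∈ P.gr n → f x ∈ Q.gr n) ∧
  (∀ x y : M, f (P.mul x y) = Q.mul (f x) (f y)) ∧
  f P.one = Q.one ∧
  (∀ x : M, f (P.d x) = Q.d (f x)) ∧
  ∀ x y : M, f (P.br x y) = Q.br (f x) (f y)

end Maps

section Tensor

variable {A B : Type u} [AddCommGroup A] [Module k A] [AddCommGroup B] [Module k B]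

/-- `R` is the tensor product differential graded Poisson algebra structure on `A ⊗[k] B`
induced by `P` and `Q`. -/
def IsTensorDGPA (P : DGPAOn k A) (Q : DGPAOn k B) (R : DGPAOn k (A ⊗[k] B)) : Prop :=
  (∀ n : ℤ, R.gr n = Submodule.span k {z : A ⊗[k] B |
      ∃ (i j : ℤ) (a : A) (b : B), i + j = n ∧ a ∈ P.gr i ∧ b ∈ Q.gr j ∧ z = a ⊗ₜ[k] b}) ∧
  R.one = P.one ⊗ₜ[k] Q.one ∧
  (∀ {i j i' j' : ℤ} {a a' : A} {b b' : B},
      a ∈ P.gr i → b ∈ Q.gr j → a' ∈ P.gr i' → b' ∈ Q.gr j' →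
    R.mul (a ⊗ₜ[k] b) (a' ⊗ₜ[k] b') = ((-1 : k) ^ (i' * j)) • (P.mul a a' ⊗ₜ[k] Q.mul b b')) ∧
  (∀ {i j : ℤ} {a : A} {b : B}, a ∈ P.gr i → b ∈ Q.gr j →
    R.d (a ⊗ₜ[k] b) = P.d a ⊗ₜ[k] b + ((-1 : k) ^ i) • (a ⊗ₜ[k] Q.d b)) ∧
  (∀ {i j i' j' : ℤ} {a a' : A} {b b' : B},
      a ∈ P.gr i → b ∈ Q.gr j → a' ∈ P.gr i' → b' ∈ Q.gr j' →
    R.br (a ⊗ₜ[k] b) (a' ⊗ₜ[k] b') =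
      ((-1 : k) ^ (i' * j)) • (P.br a a' ⊗ₜ[k] Q.mul b b' + P.mul a a' ⊗ₜ[k] Q.br b b'))

/-- `G` is the tensor product differential graded algebra structure on `A ⊗[k] B`
induced by `E` and `F` (with the Koszul sign rule). -/
def IsTensorDGA (E : DGAOn k A) (F : DGAOn k B) (G : DGAOn k (A ⊗[k] B)) : Prop :=
  (∀ n : ℤ, G.gr n = Submodule.span k {z : A ⊗[k] B |
      ∃ (i j : ℤ) (x : A) (y : B), i + j = n ∧ x ∈ E.gr i ∧ y ∈ F.gr j ∧ z = x ⊗ₜ[k] y}) ∧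
  G.one = E.one ⊗ₜ[k] F.one ∧
  (∀ {i j i' j' : ℤ} {x x' : A} {y y' : B},
      x ∈ E.gr i → y ∈ F.gr j → x' ∈ E.gr i' → y' ∈ F.gr j' →
    G.mul (x ⊗ₜ[k] y) (x' ⊗ₜ[k] y') = ((-1 : k) ^ (i' * j)) • (E.mul x x' ⊗ₜ[k] F.mul y y')) ∧
  (∀ {i j : ℤ} {x : A} {y : B}, x ∈ E.gr i → y ∈ F.gr j →
    G.d (x ⊗ₜ[k] y) = E.d x ⊗ₜ[k] y + ((-1 : k) ^ i) • (x ⊗ₜ[k] F.d y))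

end Tensor

section Env

variable {M : Type u} [AddCommGroup M] [Module k M]

/-- The defining relations of the universal enveloping algebra `A^e` of a differential
graded Poisson algebra, imposed on the tensor algebra of `M × M`; the first copy of `M`
gives the generators `m_a`, the second copy the generators `h_a`. -/
inductive EnvRel (P : DGPAOn k M) :
    TensorAlgebra k (M × M) → TensorAlgebra k (M × M) → Prop
  | relone : EnvRel P (TensorAlgebra.ι k ((P.one, 0) : M × M)) 1
  | relmul (a b : M) :
      EnvRel P (TensorAlgebra.ι k ((P.mul a b, 0) : M × M))
        (TensorAlgebra.ι k ((a, 0) : M × M) * TensorAlgebra.ι k ((b, 0) : M × M))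
  | relhmul {i j : ℤ} {a b : M} (ha : a ∈ P.gr i) (hb : b ∈ P.gr j) :
      EnvRel P (TensorAlgebra.ι k ((0, P.mul a b) : M × M))
        (TensorAlgebra.ι k ((a, 0) : M × M) * TensorAlgebra.ι k ((0, b) : M × M) +
          ((-1 : k) ^ (i * j)) •
            (TensorAlgebra.ι k ((b, 0) : M × M) * TensorAlgebra.ι k ((0, a) : M × M)))
  | relmbr {i j : ℤ} {a b : M} (ha : a ∈ P.gr i) (hb : b ∈ P.gr j) :
      EnvRel P (TensorAlgebra.ι k ((P.br a b, 0) : M × M))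
        (TensorAlgebra.ι k ((0, a) : M × M) * TensorAlgebra.ι k ((b, 0) : M × M) -
          ((-1 : k) ^ (i * j)) •
            (TensorAlgebra.ι k ((b, 0) : M × M) * TensorAlgebra.ι k ((0, a) : M × M)))
  | relhbr {i j : ℤ} {a b : M} (ha : a ∈ P.gr i) (hb : b ∈ P.gr j) :
      EnvRel P (TensorAlgebra.ι k ((0, P.br a b) : M × M))
        (TensorAlgebra.ι k ((0, a) : M × M) * TensorAlgebra.ι k ((0, b) : M × M) -
          ((-1 : k) ^ (i * j)) •
            (TensorAlgebra.ι k ((0, b) : M × M) * TensorAlgebra.ι k ((0, a) : M × M)))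

/-- The universal enveloping algebra `A^e` of a differential graded Poisson algebra,
as a quotient of the tensor algebra on two copies of `A`. -/
abbrev Env (P : DGPAOn k M) : Type u := RingQuot (EnvRel P)

/-- The generators `m_a` of `A^e`. -/
def mgen (P : DGPAOn k M) : M →ₗ[k] Env P :=
  (RingQuot.mkAlgHom k (EnvRel P)).toLinearMap ∘ₗ
    ((TensorAlgebra.ι k : (M × M) →ₗ[k] TensorAlgebra k (M × M)) ∘ₗ LinearMap.inl k M M)

/-- The generators `h_a` of `A^e`. -/
def hgen (P : DGPAOn k M) : M →ₗ[k] Env P :=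
  (RingQuot.mkAlgHom k (EnvRel P)).toLinearMap ∘ₗ
    ((TensorAlgebra.ι k : (M × M) →ₗ[k] TensorAlgebra k (M × M)) ∘ₗ LinearMap.inr k M M)

/-- `E` is the differential graded algebra structure on `A^e`, with the ring
multiplication of `A^e`, grading `|m_a| = |h_a| = |a|` and differential determined by
`∂(m_a) = m_{d a}`, `∂(h_a) = h_{d a}` and the graded Leibniz rule. -/
def IsEnvDGA (P : DGPAOn k M) (E : DGAOn k (Env P)) : Prop :=
  (∀ x y : Env P, E.mul x y = x * y) ∧
  E.one = 1 ∧
  (∀ {i : ℤ} {a : M}, a ∈ P.gr i → mgen P a ∈ E.gr i) ∧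
  (∀ {i : ℤ} {a : M}, a ∈ P.gr i → hgen P a ∈ E.gr i) ∧
  (∀ a : M, E.d (mgen P a) = mgen P (P.d a)) ∧
  (∀ a : M, E.d (hgen P a) = hgen P (P.d a))

end Env

section Lie

variable {V : Type u} [AddCommGroup V] [Module k V]

/-- The defining relations of the universal enveloping algebra of a differential graded
Lie algebra. -/
inductive LieRel (L : DGLAOn k V) : TensorAlgebra k V → TensorAlgebra k V → Prop
  | rel {i j : ℤ} {a b : V} (ha : a ∈ L.gr i) (hb : b ∈ L.gr j) :
      LieRel L
        (TensorAlgebra.ι k a * TensorAlgebra.ι k b -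
          ((-1 : k) ^ (i * j)) • (TensorAlgebra.ι k b * TensorAlgebra.ι k a))
        (TensorAlgebra.ι k (L.br a b))

/-- The universal enveloping algebra `U(L)` of a differential graded Lie algebra `L`. -/
abbrev ULie (L : DGLAOn k V) : Type u := RingQuot (LieRel L)

/-- The canonical map `L → U(L)`. -/
def uGen (L : DGLAOn k V) : V →ₗ[k] ULie L :=
  (RingQuot.mkAlgHom k (LieRel L)).toLinearMap ∘ₗ TensorAlgebra.ι k

/-- `E` is the differential graded algebra structure of `U(L)`. -/
def IsULieDGA (L : DGLAOn k V) (E : DGAOn k (ULie L)) : Prop :=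
  (∀ x y : ULie L, E.mul x y = x * y) ∧
  E.one = 1 ∧
  (∀ {i : ℤ} {a : V}, a ∈ L.gr i → uGen L a ∈ E.gr i) ∧
  (∀ a : V, E.d (uGen L a) = uGen L (L.d a))

/-- The graded-symmetry relations defining the graded symmetric algebra of `L`. -/
inductive SymRel (L : DGLAOn k V) : TensorAlgebra k V → TensorAlgebra k V → Prop
  | rel {i j : ℤ} {a b : V} (ha : a ∈ L.gr i) (hb : b ∈ L.gr j) :
      SymRel L (TensorAlgebra.ι k a * TensorAlgebra.ι k b)
        (((-1 : k) ^ (i * j)) • (TensorAlgebra.ι k b * TensorAlgebra.ι k a))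

/-- The graded symmetric algebra `𝕊L` of a differential graded Lie algebra `L`. -/
abbrev SymAlg (L : DGLAOn k V) : Type u := RingQuot (SymRel L)

/-- The canonical map `L → 𝕊L`. -/
def sGen (L : DGLAOn k V) : V →ₗ[k] SymAlg L :=
  (RingQuot.mkAlgHom k (SymRel L)).toLinearMap ∘ₗ TensorAlgebra.ι k

/-- `R` is the differential graded Poisson algebra structure on `𝕊L` with differential
extending `d` and bracket extending the Lie bracket of `L` as a graded biderivation. -/
def IsSymDGPA (L : DGLAOn k V) (R : DGPAOn k (SymAlg L)) : Prop :=
  (∀ x y : SymAlg L, R.mul x y = x * y) ∧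
  R.one = 1 ∧
  (∀ {i : ℤ} {a : V}, a ∈ L.gr i → sGen L a ∈ R.gr i) ∧
  (∀ a : V, R.d (sGen L a) = sGen L (L.d a)) ∧
  (∀ a b : V, R.br (sGen L a) (sGen L b) = sGen L (L.br a b))

/-- `S` is the graded semidirect product differential graded Lie algebra `L ⋊ L`. -/
def IsSemidirect (L : DGLAOn k V) (S : DGLAOn k (V × V)) : Prop :=
  (∀ n : ℤ, S.gr n = (L.gr n).prod (L.gr n)) ∧
  (∀ z : V × V, S.d z = (L.d z.1, L.d z.2)) ∧
  (∀ {i j : ℤ} {x₁ x₂ y₁ y₂ : V}, x₁ ∈ L.gr i → x₂ ∈ L.gr i → y₁ ∈ L.gr j → y₂ ∈ L.gr j →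
    S.br (x₁, x₂) (y₁, y₂) =
      (L.br x₂ y₁ - ((-1 : k) ^ (i * j)) • L.br y₂ x₁, L.br x₂ y₂))

end Lie

section Smash

variable {M : Type u} [AddCommGroup M] [Module k M]

/-- The generators `1#(ab) - a#b - (-1)^{|a||b|} b#a` of the ideal defining `A^E`
inside the smash product `A # U(A)`. -/
def smashGens (P : DGPAOn k M) : Set (M ⊗[k] ULie P.toLie) :=
  {z | ∃ (i j : ℤ) (a b : M), a ∈ P.gr i ∧ b ∈ P.gr j ∧
    z = P.one ⊗ₜ[k] uGen P.toLie (P.mul a b) - a ⊗ₜ[k] uGen P.toLie b -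
        ((-1 : k) ^ (i * j)) • (b ⊗ₜ[k] uGen P.toLie a)}

/-- The two-sided ideal generated by a set `T` in a differential graded algebra `S`. -/
def idealGen {N : Type u} [AddCommGroup N] [Module k N] (S : DGAOn k N) (T : Set N) :
    Submodule k N :=
  sInf {I : Submodule k N | T ⊆ I ∧ ∀ x ∈ I, ∀ y : N, S.mul x y ∈ I ∧ S.mul y x ∈ I}

/-- `S` is the smash product differential graded algebra `A # U(A)`. -/
def IsSmash (P : DGPAOn k M) (EU : DGAOn k (ULie P.toLie))
    (S : DGAOn k (M ⊗[k] ULie P.toLie)) : Prop :=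
  S.one = P.one ⊗ₜ[k] (1 : ULie P.toLie) ∧
  (∀ a b : M, S.mul (a ⊗ₜ[k] (1 : ULie P.toLie)) (b ⊗ₜ[k] (1 : ULie P.toLie)) =
      P.mul a b ⊗ₜ[k] (1 : ULie P.toLie)) ∧
  (∀ u v : ULie P.toLie, S.mul (P.one ⊗ₜ[k] u) (P.one ⊗ₜ[k] v) = P.one ⊗ₜ[k] (u * v)) ∧
  (∀ (a : M) (u : ULie P.toLie), S.mul (a ⊗ₜ[k] (1 : ULie P.toLie)) (P.one ⊗ₜ[k] u) =
      a ⊗ₜ[k] u) ∧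
  (∀ {i j : ℤ} {c b : M}, c ∈ P.gr i → b ∈ P.gr j →
    S.mul (P.one ⊗ₜ[k] uGen P.toLie c) (b ⊗ₜ[k] (1 : ULie P.toLie)) =
      P.br c b ⊗ₜ[k] (1 : ULie P.toLie) + ((-1 : k) ^ (i * j)) • (b ⊗ₜ[k] uGen P.toLie c)) ∧
  (∀ {i j : ℤ} {a : M} {u : ULie P.toLie}, a ∈ P.gr i → u ∈ EU.gr j →
      a ⊗ₜ[k] u ∈ S.gr (i + j)) ∧
  (∀ {i : ℤ} {a : M}, a ∈ P.gr i → ∀ u : ULie P.toLie,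
    S.d (a ⊗ₜ[k] u) = P.d a ⊗ₜ[k] u + ((-1 : k) ^ i) • (a ⊗ₜ[k] EU.d u))

/-- `R` is the quotient differential graded algebra structure of `S` by the ideal `I`. -/
def IsQuotDGA {N : Type u} [AddCommGroup N] [Module k N] (S : DGAOn k N)
    (I : Submodule k N) (R : DGAOn k (N ⧸ I)) : Prop :=
  (∀ n : ℤ, R.gr n = Submodule.map I.mkQ (S.gr n)) ∧
  R.one = I.mkQ S.one ∧
  (∀ x y : N, R.mul (I.mkQ x) (I.mkQ y) = I.mkQ (S.mul x y)) ∧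
  (∀ x : N, R.d (I.mkQ x) = I.mkQ (S.d x))

end Smash

section Op

variable {M N : Type u} [AddCommGroup M] [Module k M] [AddCommGroup N] [Module k N]

/-- `P'` is the opposite differential graded Poisson algebra of `P` (the product is
unchanged by graded commutativity, the bracket is negated). -/
def IsOpDGPA (P P' : DGPAOn k M) : Prop :=
  P'.gr = P.gr ∧ (∀ x y : M, P'.mul x y = P.mul x y) ∧ P'.one = P.one ∧ P'.d = P.d ∧
  (∀ x y : M, P'.br x y = - P.br x y)

/-- `E'` is the opposite differential graded algebra of `E` (with the Koszul sign). -/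
def IsOpDGA (E E' : DGAOn k N) : Prop :=
  E'.gr = E.gr ∧ E'.one = E.one ∧ E'.d = E.d ∧
  (∀ {i j : ℤ} {x y : N}, x ∈ E.gr i → y ∈ E.gr j →
    E'.mul x y = ((-1 : k) ^ (i * j)) • E.mul y x)

end Op

section UEnv

variable {M N : Type u} [AddCommGroup M] [Module k M] [AddCommGroup N] [Module k N]

/-- A pair `(f, g)` where `f : A → D` is a differential graded algebra map and
`g : A → D_L` is a differential graded Lie algebra map (into the graded commutator Lie
structure of `D`), satisfying the two compatibility conditions of the universal property
of the universal enveloping algebra of a differential graded Poisson algebra. -/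
def UEPair (P : DGPAOn k M) (D : DGAOn k N) (f g : M →ₗ[k] N) : Prop :=
  (∀ {n : ℤ} {x : M}, x ∈ P.gr n → f x ∈ D.gr n) ∧
  (∀ {n : ℤ} {x : M}, x ∈ P.gr n → g x ∈ D.gr n) ∧
  (∀ a b : M, f (P.mul a b) = D.mul (f a) (f b)) ∧
  f P.one = D.one ∧
  (∀ a : M, f (P.d a) = D.d (f a)) ∧
  (∀ a : M, g (P.d a) = D.d (g a)) ∧
  (∀ {i j : ℤ} {a b : M}, a ∈ P.gr i → b ∈ P.gr j →
    g (P.br a b) = D.mul (g a) (g b) - ((-1 : k) ^ (i * j)) • D.mul (g b) (g a)) ∧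
  (∀ {i j : ℤ} {a b : M}, a ∈ P.gr i → b ∈ P.gr j →
    f (P.br a b) = D.mul (g a) (f b) - ((-1 : k) ^ (i * j)) • D.mul (f b) (g a)) ∧
  (∀ {i j : ℤ} {a b : M}, a ∈ P.gr i → b ∈ P.gr j →
    g (P.mul a b) = D.mul (f a) (g b) + ((-1 : k) ^ (i * j)) • D.mul (f b) (g a))

/-- `(E, α, β)` is a universal enveloping algebra of the differential graded Poisson
algebra `P`. -/
def IsUEnv (P : DGPAOn k M) (E : DGAOn k N) (α β : M →ₗ[k] N) : Prop :=
  UEPair P E α β ∧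
  ∀ (D' : Type u) [AddCommGroup D'] [Module k D'] (D : DGAOn k D') (f g : M →ₗ[k] D'),
    UEPair P D f g →
    ∃! φ : N →ₗ[k] D',
      IsDGAHom E D φ ∧ (∀ a : M, φ (α a) = f a) ∧ (∀ a : M, φ (β a) = g a)

end UEnv

section IdealsQuotients

variable {M : Type u} [AddCommGroup M] [Module k M]

/-- `B` is a differential graded Poisson ideal of `P`. -/
def IsDGPIdeal (P : DGPAOn k M) (B : Submodule k M) : Prop :=
  (B = ⨆ n : ℤ, B ⊓ P.gr n) ∧
  (∀ x ∈ B, P.d x ∈ B) ∧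
  (∀ x ∈ B, ∀ a : M, P.mul x a ∈ B) ∧
  (∀ x ∈ B, ∀ a : M, P.mul a x ∈ B) ∧
  (∀ x ∈ B, ∀ a : M, P.br a x ∈ B)

/-- `B` is a differential graded Poisson subalgebra of `P`. -/
def IsDGPSubalg (P : DGPAOn k M) (B : Submodule k M) : Prop :=
  (B = ⨆ n : ℤ, B ⊓ P.gr n) ∧ P.one ∈ B ∧
  (∀ x ∈ B, ∀ y ∈ B, P.mul x y ∈ B) ∧
  (∀ x ∈ B, P.d x ∈ B) ∧
  (∀ x ∈ B, ∀ y ∈ B, P.br x y ∈ B)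

/-- `R` is the quotient differential graded Poisson algebra structure on `M ⧸ B`. -/
def IsQuotDGPA (P : DGPAOn k M) (B : Submodule k M) (R : DGPAOn k (M ⧸ B)) : Prop :=
  (∀ n : ℤ, R.gr n = Submodule.map B.mkQ (P.gr n)) ∧
  R.one = B.mkQ P.one ∧
  (∀ x y : M, R.mul (B.mkQ x) (B.mkQ y) = B.mkQ (P.mul x y)) ∧
  (∀ x : M, R.d (B.mkQ x) = B.mkQ (P.d x)) ∧
  (∀ x y : M, R.br (B.mkQ x) (B.mkQ y) = B.mkQ (P.br x y))

/-- `S` is the differential graded Poisson algebra structure induced on a differential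
graded Poisson subalgebra `B` of `P`. -/
def IsSubDGPA (P : DGPAOn k M) (B : Submodule k M) (S : DGPAOn k B) : Prop :=
  (∀ n : ℤ, S.gr n = Submodule.comap B.subtype (P.gr n)) ∧
  ((S.one : M) = P.one) ∧
  (∀ x y : B, (S.mul x y : M) = P.mul (x : M) (y : M)) ∧
  (∀ x : B, (S.d x : M) = P.d (x : M)) ∧
  (∀ x y : B, (S.br x y : M) = P.br (x : M) (y : M))

/-- The cocycles `ker d` of a differential graded Poisson algebra. -/
def Cocycles (P : DGPAOn k M) : Submodule k M := LinearMap.ker P.d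

/-- The coboundaries `im d`, viewed inside the cocycles. -/
def CobIn (P : DGPAOn k M) : Submodule k (Cocycles P) :=
  Submodule.comap (Cocycles P).subtype (LinearMap.range P.d)

/-- The cohomology `H(A) = ker d / im d` of a differential graded Poisson algebra. -/
abbrev Cohom (P : DGPAOn k M) : Type u := Cocycles P ⧸ CobIn P

/-- The class map `ker d → H(A)`. -/
def cohCls (P : DGPAOn k M) : Cocycles P →ₗ[k] Cohom P := (CobIn P).mkQ

/-- `R` is the graded Poisson algebra structure on the cohomology of `P` (a differential
graded Poisson algebra structure with zero differential, with the induced grading,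
product and bracket). -/
def IsCohomDGPA (P : DGPAOn k M) (R : DGPAOn k (Cohom P)) : Prop :=
  R.d = 0 ∧
  (∀ n : ℤ, R.gr n =
    Submodule.map (cohCls P) (Submodule.comap (Cocycles P).subtype (P.gr n))) ∧
  (∀ h : P.one ∈ Cocycles P, R.one = cohCls P ⟨P.one, h⟩) ∧
  (∀ (a b : Cocycles P) (h : P.mul (a : M) (b : M) ∈ Cocycles P),
    R.mul (cohCls P a) (cohCls P b) = cohCls P ⟨P.mul (a : M) (b : M), h⟩) ∧
  (∀ (a b : Cocycles P) (h : P.br (a : M) (b : M) ∈ Cocycles P),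
    R.br (cohCls P a) (cohCls P b) = cohCls P ⟨P.br (a : M) (b : M), h⟩)

end IdealsQuotients

end Defs

section ModuleDefs

variable {k : Type u} [Field k]

/-- A left differential graded module structure on `X` over the differential graded
algebra `E`. -/
structure DGModOn {N : Type u} [AddCommGroup N] [Module k N] (E : DGAOn k N)
    (X : Type u) [AddCommGroup X] [Module k X] where
  grm : ℤ → Submodule k X
  decomp : DirectSum.Decomposition grm
  act : N →ₗ[k] X →ₗ[k] X
  act_one : ∀ x : X, act E.one x = x
  act_mul : ∀ (r s : N) (x : X), act (E.mul r s) x = act r (act s x)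
  act_mem : ∀ {i j : ℤ} {r : N} {x : X}, r ∈ E.gr i → x ∈ grm j → act r x ∈ grm (i + j)
  dm : X →ₗ[k] X
  dm_mem : ∀ {i : ℤ} {x : X}, x ∈ grm i → dm x ∈ grm (i + 1)
  dm_sq : ∀ x : X, dm (dm x) = 0
  dm_act : ∀ {i : ℤ} {r : N}, r ∈ E.gr i → ∀ x : X,
    dm (act r x) = act (E.d r) x + ((-1 : k) ^ i) • act r (dm x)

/-- A left differential graded Poisson module structure on `X` over the differential
graded Poisson algebra `P`. -/
structure DGPModOn {M : Type u} [AddCommGroup M] [Module k M] (P : DGPAOn k M)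
    (X : Type u) [AddCommGroup X] [Module k X] where
  grm : ℤ → Submodule k X
  decomp : DirectSum.Decomposition grm
  act : M →ₗ[k] X →ₗ[k] X
  act_one : ∀ x : X, act P.one x = x
  act_mul : ∀ (a b : M) (x : X), act (P.mul a b) x = act a (act b x)
  act_mem : ∀ {i j : ℤ} {a : M} {x : X}, a ∈ P.gr i → x ∈ grm j → act a x ∈ grm (i + j)
  dm : X →ₗ[k] X
  dm_mem : ∀ {i : ℤ} {x : X}, x ∈ grm i → dm x ∈ grm (i + 1)
  dm_sq : ∀ x : X, dm (dm x) = 0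
  dm_act : ∀ {i : ℤ} {a : M}, a ∈ P.gr i → ∀ x : X,
    dm (act a x) = act (P.d a) x + ((-1 : k) ^ i) • act a (dm x)
  bact : M →ₗ[k] X →ₗ[k] X
  bact_mem : ∀ {i j : ℤ} {a : M} {x : X}, a ∈ P.gr i → x ∈ grm j → bact a x ∈ grm (i + j)
  bact_amod : ∀ {i j : ℤ} {a b : M}, a ∈ P.gr i → b ∈ P.gr j → ∀ x : X,
    bact a (act b x) = act (P.br a b) x + ((-1 : k) ^ (i * j)) • act b (bact a x)
  bact_mulact : ∀ {i j : ℤ} {a b : M}, a ∈ P.gr i → b ∈ P.gr j → ∀ x : X,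
    bact (P.mul a b) x = act a (bact b x) + ((-1 : k) ^ (i * j)) • act b (bact a x)
  bact_jacobi : ∀ {i j : ℤ} {a b : M}, a ∈ P.gr i → b ∈ P.gr j → ∀ x : X,
    bact a (bact b x) = bact (P.br a b) x + ((-1 : k) ^ (i * j)) • bact b (bact a x)
  dm_bact : ∀ {i : ℤ} {a : M}, a ∈ P.gr i → ∀ x : X,
    dm (bact a x) = bact (P.d a) x + ((-1 : k) ^ i) • bact a (dm x)

/-- A morphism of left differential graded modules. -/
def IsDGModHom {N X Y : Type u} [AddCommGroup N] [Module k N]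
    [AddCommGroup X] [Module k X] [AddCommGroup Y] [Module k Y]
    {E : DGAOn k N} (W : DGModOn E X) (W' : DGModOn E Y) (f : X →ₗ[k] Y) : Prop :=
  (∀ {n : ℤ} {x : X}, x ∈ W.grm n → f x ∈ W'.grm n) ∧
  (∀ x : X, f (W.dm x) = W'.dm (f x)) ∧
  (∀ (r : N) (x : X), f (W.act r x) = W'.act r (f x))

/-- A morphism of left differential graded Poisson modules. -/
def IsDGPModHom {M X Y : Type u} [AddCommGroup M] [Module k M]
    [AddCommGroup X] [Module k X] [AddCommGroup Y] [Module k Y]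
    {P : DGPAOn k M} (V : DGPModOn P X) (V' : DGPModOn P Y) (f : X →ₗ[k] Y) : Prop :=
  (∀ {n : ℤ} {x : X}, x ∈ V.grm n → f x ∈ V'.grm n) ∧
  (∀ x : X, f (V.dm x) = V'.dm (f x)) ∧
  (∀ (a : M) (x : X), f (V.act a x) = V'.act a (f x)) ∧
  (∀ (a : M) (x : X), f (V.bact a x) = V'.bact a (f x))

/-- The correspondence between a differential graded Poisson module structure over `P`
and a differential graded module structure over `A^e` on the same space. -/
def ModCorr {M X : Type u} [AddCommGroup M] [Module k M] [AddCommGroup X] [Module k X]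
    {P : DGPAOn k M} {E : DGAOn k (Env P)}
    (V : DGPModOn P X) (W : DGModOn E X) : Prop :=
  W.grm = V.grm ∧ W.dm = V.dm ∧
  (∀ (a : M) (x : X), W.act (mgen P a) x = V.act a x) ∧
  (∀ (a : M) (x : X), W.act (hgen P a) x = V.bact a x)

end ModuleDefs

/-!
`A^e` is the target of the universal pair `(m, h)`, so everything is decided by pairs. If `(f, g)`
is such a pair from `A` to a differential graded algebra `D`, then the same maps form a pair from
`A^{op}` to `D^{op}`: the relations for `f(ab)`, `f{a,b}` and `g{a,b}` only change by Koszul signs,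
while for `g(ab)` one evaluates `f{a,b}` in two ways by antisymmetry. Since taking opposites is an
involution, `(A^e)^{op}` with the generators of `A^e` has the universal property of `(A^{op})^e`.
-/

attribute [local instance] DGAOn.decomp DGPAOn.decomp

section Sign

variable {k : Type*} [Field k]

theorem neg_one_zpow_mul_self (n : ℤ) : (-1 : k) ^ n * (-1 : k) ^ n = 1 := by
  rw [← mul_zpow, neg_mul_neg, one_mul, one_zpow]

theorem neg_one_zpow_smul_smul {N : Type*} [AddCommGroup N] [Module k N] (n : ℤ) (x : N) :
    (-1 : k) ^ n • (-1 : k) ^ n • x = x := by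
  rw [smul_smul, neg_one_zpow_mul_self, one_smul]

/-- The sign `(-1)^(n(n-1)/2)` of the permutation reversing `n` letters. -/
def reversalSign (k : Type*) [Field k] (n : ℤ) : k :=
  (-1) ^ (n * (n - 1) / 2)

theorem reversalSign_zero : reversalSign k 0 = 1 := by
  simp [reversalSign]

theorem reversalSign_mul_self (n : ℤ) : reversalSign k n * reversalSign k n = 1 :=
  neg_one_zpow_mul_self _

theorem reversalSign_add (i j : ℤ) :
    reversalSign k (i + j) = reversalSign k i * reversalSign k j * (-1) ^ (i * j) := by
  have exponent_add : (i + j) * (i + j - 1) / 2 = i * (i - 1) / 2 + j * (j - 1) / 2 + i * j := by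
    obtain ⟨a, ha⟩ := Int.even_mul_pred_self i
    obtain ⟨b, hb⟩ := Int.even_mul_pred_self j
    have hab : (i + j) * (i + j - 1) = 2 * (a + b + i * j) := by linear_combination ha + hb
    rw [hab, ha, hb]
    omega
  have neg_one_ne_zero : (-1 : k) ≠ 0 := neg_ne_zero.mpr one_ne_zero
  rw [reversalSign, exponent_add, zpow_add₀ neg_one_ne_zero, zpow_add₀ neg_one_ne_zero]
  rfl

end Sign

section Decomposition

theorem iSupIndep_eq_of_le_of_iSup_eq_top {ι α : Type*} [CompleteLattice α] [IsModularLattice α]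
    {s t : ι → α} (ht : iSupIndep t) (hst : s ≤ t) (hs : ⨆ i, s i = ⊤) : s = t := by
  funext i
  refine eq_of_le_of_inf_le_of_sup_le (z := ⨆ (j) (_ : j ≠ i), s j) (hst i) ?_ ?_
  · have disjoint_others : Disjoint (t i) (⨆ (j) (_ : j ≠ i), s j) :=
      (ht i).mono_right (iSup₂_mono fun j _ => hst j)
    exact disjoint_others.eq_bot.trans_le bot_le
  · rw [← iSup_split_single, hs]
    exact le_top

theorem iSup_eq_top_of_adjoin_eq_top {ι R A : Type*} [AddMonoid ι] [CommSemiring R] [Semiring A]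
    [Algebra R A] {𝒜 : ι → Submodule R A} [SetLike.GradedMonoid 𝒜] {s : Set A}
    (hs : Algebra.adjoin R s = ⊤) (h : s ⊆ (⨆ i, 𝒜 i : Submodule R A)) : ⨆ i, 𝒜 i = ⊤ := by
  classical
  rw [Submodule.iSup_eq_toSubmodule_range] at h ⊢
  rw [top_le_iff.mp (hs.ge.trans (Algebra.adjoin_le h)), Algebra.top_toSubmodule]

variable {ι R M N L : Type*} [DecidableEq ι] [CommSemiring R] [AddCommMonoid M] [Module R M]
  [AddCommMonoid N] [Module R N] [AddCommMonoid L] [Module R L]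

theorem linearMap_ext_of_homogeneous (𝒜 : ι → Submodule R M) [DirectSum.Decomposition 𝒜]
    {f g : M →ₗ[R] N} (h : ∀ i, ∀ x ∈ 𝒜 i, f x = g x) : f = g :=
  DirectSum.decompose_lhom_ext 𝒜 fun i => LinearMap.ext fun x => h i x x.2

theorem bilin_ext_of_homogeneous (𝒜 : ι → Submodule R M) [DirectSum.Decomposition 𝒜]
    (ℬ : ι → Submodule R N) [DirectSum.Decomposition ℬ] {f g : M →ₗ[R] N →ₗ[R] L}
    (h : ∀ i j, ∀ x ∈ 𝒜 i, ∀ y ∈ ℬ j, f x y = g x y) : f = g :=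
  linearMap_ext_of_homogeneous 𝒜 fun i x hx =>
    linearMap_ext_of_homogeneous ℬ fun j y hy => h i j x hx y hy

theorem range_le_iSup_of_mapsTo (𝒜 : ι → Submodule R M) [DirectSum.Decomposition 𝒜]
    {f : M →ₗ[R] N} {ℬ : ι → Submodule R N} (h : ∀ i, ∀ x ∈ 𝒜 i, f x ∈ ℬ i) :
    LinearMap.range f ≤ ⨆ i, ℬ i := by
  rw [LinearMap.range_eq_map,
    ← (DirectSum.Decomposition.isInternal 𝒜).submodule_iSup_eq_top, Submodule.map_iSup]
  exact iSup_mono fun i => Submodule.map_le_iff_le_comap.mpr (h i)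

end Decomposition

section Opposite

variable {k N : Type*} [Field k] [AddCommGroup N] [Module k N]

/-- The linear involution of a graded vector space acting by `reversalSign k n` in degree `n`. In a
graded algebra it intertwines the unsigned opposite product with the Koszul-signed one. -/
def reversalTwist (𝒜 : ℤ → Submodule k N) [DirectSum.Decomposition 𝒜] : N →ₗ[k] N :=
  DirectSum.toModule k ℤ N (fun n => reversalSign k n • (𝒜 n).subtype) ∘ₗ
    (DirectSum.decomposeLinearEquiv 𝒜).toLinearMap

variable (𝒜 : ℤ → Submodule k N) [DirectSum.Decomposition 𝒜]

theorem reversalTwist_of_mem {n : ℤ} {x : N} (hx : x ∈ 𝒜 n) :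
    reversalTwist 𝒜 x = reversalSign k n • x := by
  lift x to 𝒜 n using hx
  rw [reversalTwist, LinearMap.comp_apply, LinearEquiv.coe_coe,
    DirectSum.decomposeLinearEquiv_apply_coe, DirectSum.toModule_lof]
  rfl

theorem reversalTwist_reversalTwist (x : N) : reversalTwist 𝒜 (reversalTwist 𝒜 x) = x := by
  suffices reversalTwist 𝒜 ∘ₗ reversalTwist 𝒜 = LinearMap.id from LinearMap.congr_fun this x
  refine linearMap_ext_of_homogeneous 𝒜 fun n y hy => ?_
  rw [LinearMap.comp_apply, reversalTwist_of_mem 𝒜 hy, map_smul, reversalTwist_of_mem 𝒜 hy,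
    smul_smul, reversalSign_mul_self, one_smul, LinearMap.id_apply]

end Opposite

namespace DGAOn

variable {k : Type u} [Field k] {N : Type u} [AddCommGroup N] [Module k N] (E : DGAOn k N)

theorem d_one : E.d E.one = 0 := by
  have leibniz := E.d_mul E.one_mem E.one_mem
  rwa [E.one_mul, E.mul_one, zpow_zero, one_smul, E.one_mul, left_eq_add] at leibniz

/-- The Koszul-signed opposite product `x · y = (-1)^(|x||y|) y x`, as the conjugate of the unsigned
one by `reversalTwist`; this makes it defined on all elements and visibly associative. -/
def opMul : N →ₗ[k] N →ₗ[k] N :=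
  (E.mul.flip.compl₁₂ (reversalTwist E.gr) (reversalTwist E.gr)).compr₂ (reversalTwist E.gr)

theorem opMul_apply (x y : N) :
    E.opMul x y = reversalTwist E.gr (E.mul (reversalTwist E.gr y) (reversalTwist E.gr x)) :=
  rfl

theorem opMul_of_mem {i j : ℤ} {x y : N} (hx : x ∈ E.gr i) (hy : y ∈ E.gr j) :
    E.opMul x y = (-1 : k) ^ (i * j) • E.mul y x := by
  have hi := reversalSign_mul_self (k := k) i
  have hj := reversalSign_mul_self (k := k) j
  rw [opMul_apply, reversalTwist_of_mem E.gr hx, reversalTwist_of_mem E.gr hy, map_smul,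
    LinearMap.map_smul₂, map_smul, map_smul, reversalTwist_of_mem E.gr (E.mul_mem hy hx),
    smul_smul, smul_smul, reversalSign_add, mul_comm j i]
  congr 1
  linear_combination (-1 : k) ^ (i * j) * (reversalSign k j * reversalSign k j * hi + hj)

theorem d_opMul {i j : ℤ} {x y : N} (hx : x ∈ E.gr i) (hy : y ∈ E.gr j) :
    E.d (E.opMul x y) = E.opMul (E.d x) y + (-1 : k) ^ i • E.opMul x (E.d y) := by
  have neg_one_ne_zero : (-1 : k) ≠ 0 := neg_ne_zero.mpr one_ne_zero
  have sign_left : (-1 : k) ^ ((i + 1) * j) = (-1) ^ (i * j) * (-1) ^ j := by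
    rw [add_mul, _root_.one_mul, zpow_add₀ neg_one_ne_zero]
  have sign_right : (-1 : k) ^ i * (-1) ^ (i * (j + 1)) = (-1) ^ (i * j) := by
    rw [mul_add, _root_.mul_one, zpow_add₀ neg_one_ne_zero, mul_left_comm, neg_one_zpow_mul_self,
      _root_.mul_one]
  rw [E.opMul_of_mem hx hy, E.opMul_of_mem (E.d_mem hx) hy, E.opMul_of_mem hx (E.d_mem hy),
    map_smul, E.d_mul hy hx, smul_add, smul_smul, smul_smul, sign_left, sign_right, add_comm]

theorem reversalTwist_one : reversalTwist E.gr E.one = E.one := by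
  rw [reversalTwist_of_mem E.gr E.one_mem, reversalSign_zero, one_smul]

/-- The opposite differential graded algebra, with the Koszul-signed product. -/
def op : DGAOn k N where
  gr := E.gr
  decomp := E.decomp
  mul := E.opMul
  one := E.one
  one_mem := E.one_mem
  mul_mem {i j x y} hx hy := by
    rw [E.opMul_of_mem hx hy, add_comm]
    exact Submodule.smul_mem _ _ (E.mul_mem hy hx)
  mul_assoc x y z := by simp only [opMul_apply, reversalTwist_reversalTwist, E.mul_assoc]
  one_mul x := by rw [opMul_apply, E.reversalTwist_one, E.mul_one, reversalTwist_reversalTwist]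
  mul_one x := by rw [opMul_apply, E.reversalTwist_one, E.one_mul, reversalTwist_reversalTwist]
  d := E.d
  d_mem := E.d_mem
  d_sq := E.d_sq
  d_mul := E.d_opMul

theorem isOpDGA_op : IsOpDGA E E.op :=
  ⟨rfl, rfl, rfl, E.opMul_of_mem⟩

end DGAOn

section Morphisms

variable {k : Type u} [Field k] {M N L : Type u} [AddCommGroup M] [Module k M]
  [AddCommGroup N] [Module k N] [AddCommGroup L] [Module k L]

theorem IsOpDGPA.symm {P P' : DGPAOn k M} (h : IsOpDGPA P P') : IsOpDGPA P' P := by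
  obtain ⟨hgr, hmul, hone, hd, hbr⟩ := h
  exact ⟨hgr.symm, fun x y => (hmul x y).symm, hone.symm, hd.symm,
    fun x y => by rw [hbr, neg_neg]⟩

theorem IsOpDGA.symm {E E' : DGAOn k M} (h : IsOpDGA E E') : IsOpDGA E' E := by
  obtain ⟨hgr, hone, hd, hmul⟩ := h
  refine ⟨hgr.symm, hone.symm, hd.symm, fun {i j x y} hx hy => ?_⟩
  rw [hgr] at hx hy
  rw [hmul hy hx, mul_comm j i, neg_one_zpow_smul_smul]

theorem IsDGAHom.id (E : DGAOn k M) : IsDGAHom E E LinearMap.id :=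
  ⟨fun hx => hx, fun _ _ => rfl, rfl, fun _ => rfl⟩

theorem IsDGAHom.comp {E : DGAOn k M} {F : DGAOn k N} {G : DGAOn k L} {g : N →ₗ[k] L}
    {f : M →ₗ[k] N} (hg : IsDGAHom F G g) (hf : IsDGAHom E F f) : IsDGAHom E G (g ∘ₗ f) := by
  obtain ⟨f_mem, f_mul, f_one, f_d⟩ := hf
  obtain ⟨g_mem, g_mul, g_one, g_d⟩ := hg
  refine ⟨fun hx => g_mem (f_mem hx), fun x y => ?_, ?_, fun x => ?_⟩ <;>
    simp only [LinearMap.comp_apply, f_mul, g_mul, f_one, g_one, f_d, g_d]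

theorem IsDGAHom.op {E E' : DGAOn k M} {F F' : DGAOn k N} {f : M →ₗ[k] N} (hf : IsDGAHom E F f)
    (hE : IsOpDGA E E') (hF : IsOpDGA F F') : IsDGAHom E' F' f := by
  obtain ⟨f_mem, f_mul, f_one, f_d⟩ := hf
  obtain ⟨hE_gr, hE_one, hE_d, hE_mul⟩ := hE
  obtain ⟨hF_gr, hF_one, hF_d, hF_mul⟩ := hF
  have f_mul_op : E'.mul.compr₂ f = F'.mul.compl₁₂ f f := by
    refine bilin_ext_of_homogeneous E.gr E.gr fun i j x hx y hy => ?_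
    rw [LinearMap.compr₂_apply, LinearMap.compl₁₂_apply, hE_mul hx hy, map_smul, f_mul,
      hF_mul (f_mem hx) (f_mem hy)]
  refine ⟨fun {n x} hx => ?_, fun x y => LinearMap.congr_fun₂ f_mul_op x y, ?_, fun x => ?_⟩
  · rw [hE_gr] at hx
    exact hF_gr ▸ f_mem hx
  · rw [hE_one, f_one, hF_one]
  · rw [hE_d, f_d, hF_d]

theorem isDGAHom_op_iff {E E' : DGAOn k M} {F F' : DGAOn k N} {f : M →ₗ[k] N}
    (hE : IsOpDGA E E') (hF : IsOpDGA F F') : IsDGAHom E' F' f ↔ IsDGAHom E F f :=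
  ⟨fun hf => hf.op hE.symm hF.symm, fun hf => hf.op hE hF⟩

end Morphisms

section OppositePairs

variable {k : Type u} [Field k] {M N : Type u} [AddCommGroup M] [Module k M]
  [AddCommGroup N] [Module k N] {P P' : DGPAOn k M} {D D' : DGAOn k N} {f g : M →ₗ[k] N}

theorem UEPair.map_mul_op (h : UEPair P D f g) (hD : IsOpDGA D D') (a b : M) :
    f (P.mul a b) = D'.mul (f a) (f b) := by
  obtain ⟨f_mem, -, f_mul, -⟩ := h
  suffices P.mul.compr₂ f = D'.mul.compl₁₂ f f from LinearMap.congr_fun₂ this a b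
  refine bilin_ext_of_homogeneous P.gr P.gr fun i j x hx y hy => ?_
  rw [LinearMap.compr₂_apply, LinearMap.compl₁₂_apply, P.mul_comm hx hy, map_smul, f_mul,
    hD.2.2.2 (f_mem hx) (f_mem hy)]

theorem UEPair.map_hmul_op (h : UEPair P D f g) (hD : IsOpDGA D D') {i j : ℤ} {a b : M}
    (ha : a ∈ P.gr i) (hb : b ∈ P.gr j) :
    g (P.mul a b) = D'.mul (f a) (g b) + (-1 : k) ^ (i * j) • D'.mul (f b) (g a) := by
  obtain ⟨f_mem, g_mem, -, -, -, -, -, f_br, g_mul⟩ := h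
  have f_br_antisymm : f (P.br a b) = -((-1 : k) ^ (i * j) • f (P.br b a)) := by
    rw [P.br_antisymm ha hb, map_neg, map_smul]
  rw [f_br ha hb, f_br hb ha, mul_comm j i, smul_sub, neg_one_zpow_smul_smul] at f_br_antisymm
  rw [g_mul ha hb, hD.2.2.2 (f_mem ha) (g_mem hb), hD.2.2.2 (f_mem hb) (g_mem ha), mul_comm j i,
    neg_one_zpow_smul_smul]
  linear_combination (norm := module) -f_br_antisymm

theorem UEPair.op (h : UEPair P D f g) (hP : IsOpDGPA P P') (hD : IsOpDGA D D') :
    UEPair P' D' f g := by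
  have f_mul_op := h.map_mul_op hD
  have g_mul_op {i j : ℤ} {a b : M} (ha : a ∈ P.gr i) (hb : b ∈ P.gr j) :=
    h.map_hmul_op hD ha hb
  obtain ⟨f_mem, g_mem, -, f_one, f_d, g_d, g_br, f_br, -⟩ := h
  obtain ⟨hP_gr, hP_mul, hP_one, hP_d, hP_br⟩ := hP
  obtain ⟨hD_gr, hD_one, hD_d, hD_mul⟩ := hD
  refine ⟨?_, ?_, ?_, ?_, ?_, ?_, ?_, ?_, ?_⟩
  · rwa [hP_gr, hD_gr]
  · rwa [hP_gr, hD_gr]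
  · simpa only [hP_mul] using f_mul_op
  · rw [hP_one, hD_one, f_one]
  · rwa [hP_d, hD_d]
  · rwa [hP_d, hD_d]
  · intro i j a b ha hb
    rw [hP_gr] at ha hb
    rw [hP_br, map_neg, g_br ha hb, hD_mul (g_mem ha) (g_mem hb), hD_mul (g_mem hb) (g_mem ha),
      mul_comm j i, neg_one_zpow_smul_smul, neg_sub]
  · intro i j a b ha hb
    rw [hP_gr] at ha hb
    rw [hP_br, map_neg, f_br ha hb, hD_mul (g_mem ha) (f_mem hb), hD_mul (f_mem hb) (g_mem ha),
      mul_comm j i, neg_one_zpow_smul_smul, neg_sub]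
  · intro i j a b ha hb
    rw [hP_gr] at ha hb
    rw [hP_mul, g_mul_op ha hb]

end OppositePairs

namespace IsUEnv

variable {k : Type u} [Field k] {M N N' : Type u} [AddCommGroup M] [Module k M]
  [AddCommGroup N] [Module k N] [AddCommGroup N'] [Module k N'] {P P' : DGPAOn k M}
  {E E' : DGAOn k N} {F : DGAOn k N'} {α β : M →ₗ[k] N} {α' β' : M →ₗ[k] N'}

theorem op (h : IsUEnv P E α β) (hP : IsOpDGPA P P') (hE : IsOpDGA E E') : IsUEnv P' E' α β := by
  refine ⟨h.1.op hP hE, fun X _ _ D f g hfg => ?_⟩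
  simpa only [isDGAHom_op_iff hE D.isOpDGA_op.symm] using
    h.2 X D.op f g (hfg.op hP.symm D.isOpDGA_op)

theorem eq_id (h : IsUEnv P E α β) {f : N →ₗ[k] N} (hf : IsDGAHom E E f)
    (hα : ∀ a, f (α a) = α a) (hβ : ∀ a, f (β a) = β a) : f = LinearMap.id :=
  (h.2 N E α β h.1).unique ⟨hf, hα, hβ⟩ ⟨IsDGAHom.id E, fun _ => rfl, fun _ => rfl⟩

theorem exists_bijective (hE : IsUEnv P E α β) (hF : IsUEnv P F α' β') :
    ∃ φ : N →ₗ[k] N', IsDGAHom E F φ ∧ Function.Bijective φ ∧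
      (∀ a, φ (α a) = α' a) ∧ ∀ a, φ (β a) = β' a := by
  obtain ⟨φ, ⟨hφ, φ_α, φ_β⟩, -⟩ := hE.2 N' F α' β' hF.1
  obtain ⟨ψ, ⟨hψ, ψ_α, ψ_β⟩, -⟩ := hF.2 N E α β hE.1
  have left_inv : ψ ∘ₗ φ = LinearMap.id :=
    hE.eq_id (hψ.comp hφ) (fun a => by rw [LinearMap.comp_apply, φ_α, ψ_α])
      (fun a => by rw [LinearMap.comp_apply, φ_β, ψ_β])
  have right_inv : φ ∘ₗ ψ = LinearMap.id :=
    hF.eq_id (hφ.comp hψ) (fun a => by rw [LinearMap.comp_apply, ψ_α, φ_α])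
      (fun a => by rw [LinearMap.comp_apply, ψ_β, φ_β])
  exact ⟨φ, hφ, Function.bijective_iff_has_inverse.mpr
    ⟨ψ, LinearMap.congr_fun left_inv, LinearMap.congr_fun right_inv⟩, φ_α, φ_β⟩

end IsUEnv

namespace DGAOn

variable {k : Type u} [Field k] {N : Type u} [AddCommGroup N] [Module k N]

/-- The underlying space of a differential graded algebra, as a type carrying the `k`-algebra
structure given by `DGAOn.mul`. It is a synonym because the space itself (for instance `Env P`) may
already have another multiplication. -/
def Carrier (_D : DGAOn k N) : Type u :=
  N

variable (D : DGAOn k N)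

instance : AddCommGroup D.Carrier :=
  inferInstanceAs (AddCommGroup N)

instance : Module k D.Carrier :=
  inferInstanceAs (Module k N)

instance : Ring D.Carrier :=
  { (inferInstance : AddCommGroup D.Carrier) with
    mul := fun x y => D.mul x y
    one := D.one
    mul_assoc := D.mul_assoc
    one_mul := D.one_mul
    mul_one := D.mul_one
    left_distrib := fun x y z => (D.mul x).map_add y z
    right_distrib := fun x y z => D.mul.map_add₂ x y z
    zero_mul := fun x => D.mul.map_zero₂ x
    mul_zero := fun x => (D.mul x).map_zero }

instance : Algebra k D.Carrier :=
  Algebra.ofModule (fun r x y => D.mul.map_smul₂ r x y) (fun r x y => (D.mul x).map_smul r y)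

end DGAOn

section Generators

variable {k : Type u} [Field k] {M : Type u} [AddCommGroup M] [Module k M] (P : DGPAOn k M)

theorem mgen_one : mgen P P.one = 1 :=
  (RingQuot.mkAlgHom_rel k EnvRel.relone).trans (map_one _)

theorem mgen_mul (a b : M) : mgen P (P.mul a b) = mgen P a * mgen P b :=
  (RingQuot.mkAlgHom_rel k (EnvRel.relmul a b)).trans (map_mul _ _ _)

variable {P} {i j : ℤ} {a b : M}

theorem hgen_mul (ha : a ∈ P.gr i) (hb : b ∈ P.gr j) :
    hgen P (P.mul a b) =
      mgen P a * hgen P b + (-1 : k) ^ (i * j) • (mgen P b * hgen P a) := by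
  refine (RingQuot.mkAlgHom_rel k (EnvRel.relhmul ha hb)).trans ?_
  rw [map_add, map_smul, map_mul, map_mul]
  rfl

theorem mgen_br (ha : a ∈ P.gr i) (hb : b ∈ P.gr j) :
    mgen P (P.br a b) =
      hgen P a * mgen P b - (-1 : k) ^ (i * j) • (mgen P b * hgen P a) := by
  refine (RingQuot.mkAlgHom_rel k (EnvRel.relmbr ha hb)).trans ?_
  rw [map_sub, map_smul, map_mul, map_mul]
  rfl

theorem hgen_br (ha : a ∈ P.gr i) (hb : b ∈ P.gr j) :
    hgen P (P.br a b) =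
      hgen P a * hgen P b - (-1 : k) ^ (i * j) • (hgen P b * hgen P a) := by
  refine (RingQuot.mkAlgHom_rel k (EnvRel.relhbr ha hb)).trans ?_
  rw [map_sub, map_smul, map_mul, map_mul]
  rfl

variable (P) in
theorem adjoin_mgen_hgen :
    Algebra.adjoin k (Set.range (mgen P) ∪ Set.range (hgen P)) = ⊤ := by
  refine top_le_iff.mp ?_
  rw [← (AlgHom.range_eq_top _).mpr (RingQuot.mkAlgHom_surjective k (EnvRel P)),
    ← Algebra.map_top, ← TensorAlgebra.adjoin_range_ι, AlgHom.map_adjoin]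
  refine Algebra.adjoin_le ?_
  rintro _ ⟨_, ⟨⟨a, b⟩, rfl⟩, rfl⟩
  rw [← Prod.fst_add_snd (a, b), map_add, map_add]
  exact add_mem (Algebra.subset_adjoin (Or.inl ⟨a, rfl⟩))
    (Algebra.subset_adjoin (Or.inr ⟨b, rfl⟩))

end Generators

section Lift

variable {k : Type u} [Field k] {M N : Type u} [AddCommGroup M] [Module k M]
  [AddCommGroup N] [Module k N] {P : DGPAOn k M} {D : DGAOn k N} {f g : M →ₗ[k] N}

variable (D f g) in
/-- The extension of the prescribed images `f a` of `m_a` and `g a` of `h_a` to the free algebra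
of which `A^e` is a quotient. -/
def tensorLift : TensorAlgebra k (M × M) →ₐ[k] D.Carrier :=
  TensorAlgebra.lift k (LinearMap.coprod (M₃ := D.Carrier) f g)

theorem tensorLift_inl (a : M) :
    tensorLift D f g (TensorAlgebra.ι k ((a, 0) : M × M)) = (f a : N) := by
  refine (TensorAlgebra.lift_ι_apply _ _).trans ?_
  change f a + g 0 = f a
  rw [map_zero, add_zero]

theorem tensorLift_inr (a : M) :
    tensorLift D f g (TensorAlgebra.ι k ((0, a) : M × M)) = (g a : N) := by
  refine (TensorAlgebra.lift_ι_apply _ _).trans ?_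
  change f 0 + g a = g a
  rw [map_zero, zero_add]

namespace UEPair

theorem tensorLift_eq (h : UEPair P D f g) ⦃x y : TensorAlgebra k (M × M)⦄ (hxy : EnvRel P x y) :
    tensorLift D f g x = tensorLift D f g y := by
  obtain ⟨-, -, f_mul, f_one, -, -, g_br, f_br, g_mul⟩ := h
  cases hxy with
  | relone =>
    rw [tensorLift_inl, map_one]
    exact f_one
  | relmul a b =>
    rw [map_mul, tensorLift_inl, tensorLift_inl, tensorLift_inl]
    exact f_mul a b
  | relhmul ha hb =>
    simp only [map_add, map_smul, map_mul, tensorLift_inl, tensorLift_inr]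
    exact g_mul ha hb
  | relmbr ha hb =>
    simp only [map_sub, map_smul, map_mul, tensorLift_inl, tensorLift_inr]
    exact f_br ha hb
  | relhbr ha hb =>
    simp only [map_sub, map_smul, map_mul, tensorLift_inr]
    exact g_br ha hb

/-- The algebra map `A^e → D` induced by a pair `(f, g)`. -/
def liftAlgHom (h : UEPair P D f g) : Env P →ₐ[k] D.Carrier :=
  RingQuot.liftAlgHom k ⟨tensorLift D f g, h.tensorLift_eq⟩

/-- `UEPair.liftAlgHom` as a linear map into the space underlying `D`. -/
def lift (h : UEPair P D f g) : Env P →ₗ[k] N :=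
  h.liftAlgHom.toLinearMap

theorem lift_one (h : UEPair P D f g) : h.lift 1 = D.one :=
  map_one h.liftAlgHom

theorem lift_mul (h : UEPair P D f g) (x y : Env P) :
    h.lift (x * y) = D.mul (h.lift x) (h.lift y) :=
  map_mul h.liftAlgHom x y

theorem lift_mgen (h : UEPair P D f g) (a : M) : h.lift (mgen P a) = f a :=
  (RingQuot.liftAlgHom_mkAlgHom_apply k _ h.tensorLift_eq _).trans (tensorLift_inl a)

theorem lift_hgen (h : UEPair P D f g) (a : M) : h.lift (hgen P a) = g a :=
  (RingQuot.liftAlgHom_mkAlgHom_apply k _ h.tensorLift_eq _).trans (tensorLift_inr a)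

end UEPair

end Lift

section HomLocus

variable {k : Type u} [Field k] {M N : Type u} [AddCommGroup M] [Module k M]
  [AddCommGroup N] [Module k N]

/-- The elements of degree `n` whose image under `φ` again has degree `n` and on which `φ` commutes
with the differentials. For multiplicative `φ` these form a graded subalgebra, so whether `φ` is a
morphism can be tested on generators. -/
def homLocus (E : DGAOn k M) (D : DGAOn k N) (φ : M →ₗ[k] N) (n : ℤ) : Submodule k M :=
  E.gr n ⊓ (D.gr n).comap φ ⊓ LinearMap.eqLocus (φ ∘ₗ E.d) (D.d ∘ₗ φ)

variable {E : DGAOn k M} {D : DGAOn k N} {φ : M →ₗ[k] N}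

theorem mem_homLocus {n : ℤ} {x : M} :
    x ∈ homLocus E D φ n ↔ (x ∈ E.gr n ∧ φ x ∈ D.gr n) ∧ φ (E.d x) = D.d (φ x) :=
  Iff.rfl

theorem one_mem_homLocus (φ_one : φ E.one = D.one) : E.one ∈ homLocus E D φ 0 := by
  rw [mem_homLocus, φ_one, E.d_one, D.d_one, map_zero]
  exact ⟨⟨E.one_mem, D.one_mem⟩, rfl⟩

theorem mul_mem_homLocus (φ_mul : ∀ x y, φ (E.mul x y) = D.mul (φ x) (φ y)) {i j : ℤ} {x y : M}
    (hx : x ∈ homLocus E D φ i) (hy : y ∈ homLocus E D φ j) :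
    E.mul x y ∈ homLocus E D φ (i + j) := by
  obtain ⟨⟨hx_deg, hφx_deg⟩, hx_d⟩ := mem_homLocus.mp hx
  obtain ⟨⟨hy_deg, hφy_deg⟩, hy_d⟩ := mem_homLocus.mp hy
  refine mem_homLocus.mpr ⟨⟨E.mul_mem hx_deg hy_deg, ?_⟩, ?_⟩
  · rw [φ_mul]
    exact D.mul_mem hφx_deg hφy_deg
  · rw [φ_mul, D.d_mul hφx_deg hφy_deg, E.d_mul hx_deg hy_deg, map_add, map_smul, φ_mul, φ_mul,
      hx_d, hy_d]

theorem isDGAHom_of_homLocus_eq_gr (φ_mul : ∀ x y, φ (E.mul x y) = D.mul (φ x) (φ y))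
    (φ_one : φ E.one = D.one) (h : homLocus E D φ = E.gr) : IsDGAHom E D φ := by
  have mem_of_mem_gr {n : ℤ} {x : M} (hx : x ∈ E.gr n) : x ∈ homLocus E D φ n := by rwa [h]
  have φ_d : φ ∘ₗ E.d = D.d ∘ₗ φ :=
    linearMap_ext_of_homogeneous E.gr fun n x hx => (mem_of_mem_gr hx).2
  exact ⟨fun hx => (mem_of_mem_gr hx).1.2, φ_mul, φ_one, LinearMap.congr_fun φ_d⟩

end HomLocus

namespace IsEnvDGA

variable {k : Type u} [Field k] {M N : Type u} [AddCommGroup M] [Module k M]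
  [AddCommGroup N] [Module k N] {P : DGPAOn k M} {E : DGAOn k (Env P)} {D : DGAOn k N}

theorem uePair (hE : IsEnvDGA P E) : UEPair P E (mgen P) (hgen P) := by
  obtain ⟨E_mul, E_one, mgen_mem, hgen_mem, d_mgen, d_hgen⟩ := hE
  simp only [UEPair, E_mul]
  exact ⟨mgen_mem, hgen_mem, mgen_mul P, (mgen_one P).trans E_one.symm,
    fun a => (d_mgen a).symm, fun a => (d_hgen a).symm, hgen_br, mgen_br, hgen_mul⟩

theorem eq_gr_of_gradedMonoid {𝒢 : ℤ → Submodule k (Env P)} [SetLike.GradedMonoid 𝒢]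
    (h𝒢 : 𝒢 ≤ E.gr) (hm : ∀ i, ∀ a ∈ P.gr i, mgen P a ∈ 𝒢 i)
    (hh : ∀ i, ∀ a ∈ P.gr i, hgen P a ∈ 𝒢 i) : 𝒢 = E.gr :=
  iSupIndep_eq_of_le_of_iSup_eq_top
    (DirectSum.Decomposition.isInternal E.gr).submodule_iSupIndep h𝒢
    (iSup_eq_top_of_adjoin_eq_top (adjoin_mgen_hgen P)
      (Set.union_subset (range_le_iSup_of_mapsTo P.gr hm) (range_le_iSup_of_mapsTo P.gr hh)))

theorem isDGAHom_lift (hE : IsEnvDGA P E) {f g : M →ₗ[k] N} (h : UEPair P D f g) :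
    IsDGAHom E D h.lift := by
  obtain ⟨E_mul, E_one, mgen_mem, hgen_mem, d_mgen, d_hgen⟩ := hE
  obtain ⟨f_mem, g_mem, -, -, f_d, g_d, -⟩ := id h
  have lift_one : h.lift E.one = D.one := by rw [E_one, h.lift_one]
  have lift_mul (x y : Env P) : h.lift (E.mul x y) = D.mul (h.lift x) (h.lift y) := by
    rw [E_mul, h.lift_mul]
  have : SetLike.GradedMonoid (homLocus E D h.lift) :=
    { one_mem := E_one ▸ one_mem_homLocus lift_one
      mul_mem := fun i j x y hx hy => E_mul x y ▸ mul_mem_homLocus lift_mul hx hy }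
  refine isDGAHom_of_homLocus_eq_gr lift_mul lift_one
    (eq_gr_of_gradedMonoid (fun n x hx => hx.1.1) (fun i a ha => ?_) fun i a ha => ?_)
  · rw [mem_homLocus, d_mgen, h.lift_mgen, h.lift_mgen, f_d]
    exact ⟨⟨mgen_mem ha, f_mem ha⟩, rfl⟩
  · rw [mem_homLocus, d_hgen, h.lift_hgen, h.lift_hgen, g_d]
    exact ⟨⟨hgen_mem ha, g_mem ha⟩, rfl⟩

theorem hom_ext (hE : IsEnvDGA P E) {φ ψ : Env P →ₗ[k] N} (hφ : IsDGAHom E D φ)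
    (hψ : IsDGAHom E D ψ) (hm : ∀ a, φ (mgen P a) = ψ (mgen P a))
    (hh : ∀ a, φ (hgen P a) = ψ (hgen P a)) : φ = ψ := by
  obtain ⟨E_mul, E_one, -⟩ := hE
  obtain ⟨-, φ_mul, φ_one, -⟩ := hφ
  obtain ⟨-, ψ_mul, ψ_one, -⟩ := hψ
  ext x
  have hx : x ∈ Algebra.adjoin k (Set.range (mgen P) ∪ Set.range (hgen P)) :=
    adjoin_mgen_hgen P ▸ Algebra.mem_top
  induction hx using Algebra.adjoin_induction with
  | mem x hx =>
    obtain ⟨a, rfl⟩ | ⟨a, rfl⟩ := hx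
    exacts [hm a, hh a]
  | algebraMap r =>
    rw [Algebra.algebraMap_eq_smul_one, map_smul, map_smul, ← E_one, φ_one, ψ_one]
  | add x y _ _ hx hy => rw [map_add, map_add, hx, hy]
  | mul x y _ _ hx hy => rw [← E_mul, φ_mul, ψ_mul, hx, hy]

theorem isUEnv (hE : IsEnvDGA P E) : IsUEnv P E (mgen P) (hgen P) :=
  ⟨hE.uePair, fun _ _ _ _ _ _ h =>
    ⟨h.lift, ⟨hE.isDGAHom_lift h, h.lift_mgen, h.lift_hgen⟩,
      fun _ ⟨hψ, ψ_mgen, ψ_hgen⟩ => hE.hom_ext hψ (hE.isDGAHom_lift h)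
        (fun a => (ψ_mgen a).trans (h.lift_mgen a).symm)
        (fun a => (ψ_hgen a).trans (h.lift_hgen a).symm)⟩⟩

end IsEnvDGA

/-- `(A^{op})^e ≅ (A^e)^{op}` as differential graded algebras, via the map
sending the generators `m_a, h_a` of `(A^{op})^e` to the corresponding generators of
`(A^e)^{op}`. -/
theorem stmt_17 (k : Type u) [Field k] (M : Type u) [AddCommGroup M] [Module k M]
    (P P' : DGPAOn k M) (hop : IsOpDGPA P P')
    (E : DGAOn k (Env P)) (hE : IsEnvDGA P E)
    (E' : DGAOn k (Env P')) (hE' : IsEnvDGA P' E')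
    (Eop : DGAOn k (Env P)) (hEop : IsOpDGA E Eop) :
    ∃ φ : Env P' →ₗ[k] Env P,
      IsDGAHom E' Eop φ ∧ Function.Bijective φ ∧
      (∀ a : M, φ (mgen P' a) = mgen P a) ∧ (∀ a : M, φ (hgen P' a) = hgen P a) := by
  exact hE'.isUEnv.exists_bijective (hE.isUEnv.op hop hEop)

end DGPaper

end
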